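/- arXiv:math/0206158 — 9 statements merged into one kernel-verified Lean document; each statement's English description precedes it below -/
import Mathlib

section
/- Let $d$ be a positive integer with $d \equiv 1 \pmod 8$. Then there exist odd integers $x, y$ satisfying $x^2 - d y^2 = 16$ and ($x \equiv 4 \pmod d$ or $x \equiv -4 \pmod d$) if and only if there exist integers $a, b$ with $a^2 - d b^2 = 8$ or $a^2 - d b^2 = -8$. -/
lemma aux_fwd (d x y : ℤ) (hx : Odd x) (hy : Odd y) (h : x ^ 2 - d * y ^ 2 = 16)
    (hd : 0 < d) (h4 : x ≡ 4 [ZMOD d]) (hd8 : d ≡ 1 [ZMOD 8]) :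
    ∃ a b : ℤ, a ^ 2 - d * b ^ 2 = 8 ∨ a ^ 2 - d * b ^ 2 = -8 := by
  obtain ⟨k, hk⟩ := h4.symm.dvd
  have hx' : x = d * k + 4 := by linarith
  subst hx'
  have hky : k * (d * k + 8) = y ^ 2 := by
    apply mul_left_cancel₀ hd.ne'
    linarith [h]
  have hko : Odd k := by
    by_contra hk'
    rw [Int.not_odd_iff_even] at hk'
    have : Even (d * k + 4) := (hk'.mul_left d).add (by decide)
    exact (Int.not_odd_iff_even.mpr this) hx
  have h2 : IsCoprime k 2 := by
    obtain ⟨m, hm⟩ := hko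
    exact ⟨1, -m, by rw [hm]; ring⟩
  have h8 : IsCoprime k (d * k + 8) := by
    have h3 : IsCoprime k ((2 : ℤ) ^ 3) := h2.pow_right
    obtain ⟨u, v, huv⟩ := h3
    exact ⟨u - v * d, v, by linarith [huv]⟩
  have hypos : 0 < y ^ 2 := by
    have : y ≠ 0 := by rintro rfl; simp at hy
    positivity
  obtain ⟨b, hb⟩ := Int.sq_of_isCoprime h8 hky
  obtain ⟨a, ha⟩ := Int.sq_of_isCoprime h8.symm ((mul_comm _ _).trans hky)
  refine ⟨a, b, ?_⟩
  rcases hb with hb | hb <;> rcases ha with ha | ha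
  · left; rw [← ha, ← hb]; ring
  · rw [ha, hb] at hky; nlinarith [mul_nonneg (sq_nonneg a) (sq_nonneg b)]
  · rw [ha, hb] at hky; nlinarith [mul_nonneg (sq_nonneg a) (sq_nonneg b)]
  · right
    have e : b ^ 2 = -k := by linarith
    have e' : a ^ 2 = -(d * k + 8) := by linarith
    rw [e, e']; ring

lemma aux_odd (d a b : ℤ) (hd8 : d ≡ 1 [ZMOD 8])
    (h : a ^ 2 - d * b ^ 2 = 8 ∨ a ^ 2 - d * b ^ 2 = -8) : Odd a ∧ Odd b := by
  obtain ⟨t, ht⟩ := hd8.symm.dvd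
  have hd : d = 8 * t + 1 := by linarith
  subst hd
  have key : ∃ s : ℤ, a ^ 2 - (8 * t + 1) * b ^ 2 = 16 * s + 8 := by
    rcases h with h | h
    · exact ⟨0, by linarith⟩
    · exact ⟨-1, by linarith⟩
  obtain ⟨s, hs⟩ := key
  have h2 : ∀ n : ℤ, Even (n * (n + 1)) := Int.even_mul_succ_self
  rcases Int.even_or_odd' a with ⟨m, rfl | rfl⟩ <;> rcases Int.even_or_odd' b with ⟨n, rfl | rfl⟩
  · exfalso
    have h1 : m ^ 2 - n ^ 2 - 8 * (t * n ^ 2) = 4 * s + 2 := by linarith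
    rcases Int.even_or_odd' m with ⟨p, rfl | rfl⟩ <;>
      rcases Int.even_or_odd' n with ⟨q, rfl | rfl⟩ <;> ring_nf at h1 <;> omega
  · exfalso; ring_nf at hs; omega
  · exfalso; ring_nf at hs; omega
  · exact ⟨⟨m, rfl⟩, ⟨n, rfl⟩⟩

/-- Arithmetic core of Theorem 3.1.7: for `d > 0`, `d ≡ 1 (mod 8)`, the equation
`x² - d y² = 16` has an odd solution with `x ≡ ±4 (mod d)` iff one of the equations
`a² - d b² = ±8` has an integral solution. -/
theorem stmt_0 (d : ℤ) (hd : 0 < d) (hd8 : d ≡ 1 [ZMOD 8]) :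
    (∃ x y : ℤ, Odd x ∧ Odd y ∧ x ^ 2 - d * y ^ 2 = 16 ∧
      (x ≡ 4 [ZMOD d] ∨ x ≡ -4 [ZMOD d])) ↔
    (∃ a b : ℤ, a ^ 2 - d * b ^ 2 = 8 ∨ a ^ 2 - d * b ^ 2 = -8) := by
  constructor
  · rintro ⟨x, y, hx, hy, h, h4 | h4⟩
    · exact aux_fwd d x y hx hy h hd h4 hd8
    · exact aux_fwd d (-x) y hx.neg hy (by rw [neg_sq]; exact h) hd (by simpa using h4.neg) hd8
  · rintro ⟨a, b, h⟩
    obtain ⟨ha, hb⟩ := aux_odd d a b hd8 h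
    rcases h with h | h
    · refine ⟨a ^ 2 - 4, a * b, ha.pow.sub_even (by decide), ha.mul hb, ?_, Or.inl ?_⟩
      · have e : a ^ 2 = d * b ^ 2 + 8 := by linarith
        rw [mul_pow, e]; ring
      · exact (Int.modEq_of_dvd ⟨b ^ 2, by linarith⟩ : (4 : ℤ) ≡ a ^ 2 - 4 [ZMOD d]).symm
    · refine ⟨a ^ 2 + 4, a * b, ha.pow.add_even (by decide), ha.mul hb, ?_, Or.inr ?_⟩
      · have e : a ^ 2 = d * b ^ 2 - 8 := by linarith
        rw [mul_pow, e]; ring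
      · exact (Int.modEq_of_dvd ⟨b ^ 2, by linarith⟩ : (-4 : ℤ) ≡ a ^ 2 + 4 [ZMOD d]).symm
end

section
/- Let $d$ be a positive integer with $d \equiv 1 \pmod 8$, and let $x, y$ be odd integers with $x^2 - d y^2 = 16$ and ($x \equiv 4 \pmod d$ or $x \equiv -4 \pmod d$). Then there exist odd integers $a, b$ and a sign $\epsilon \in \{1, -1\}$ such that either $a^2 - d b^2 = 8$, $x = \epsilon(a^2 - 4)$ and $y = \epsilon\, a b$, or $a^2 - d b^2 = -8$, $x = \epsilon(a^2 + 4)$ and $y = \epsilon\, a b$. -/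
lemma aux_sq (k m y : ℤ) (hc : IsCoprime m k) (hy : Odd y) (h : m * k = y ^ 2) :
    ∃ a b ε : ℤ, Odd a ∧ Odd b ∧ (ε = 1 ∨ ε = -1) ∧ m = ε * a ^ 2 ∧ k = ε * b ^ 2 ∧
      y = ε * (a * b) := by
  have hy0 : y ≠ 0 := by rintro rfl; simp at hy
  have hpos : 0 < y ^ 2 := by positivity
  obtain ⟨a, ha⟩ := Int.sq_of_isCoprime hc h
  obtain ⟨b, hb⟩ := Int.sq_of_isCoprime hc.symm (by rw [mul_comm]; exact h)
  have key : ∃ ε : ℤ, (ε = 1 ∨ ε = -1) ∧ m = ε * a ^ 2 ∧ k = ε * b ^ 2 := by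
    rcases ha with ha | ha <;> rcases hb with hb | hb
    · exact ⟨1, by simp, by linarith, by linarith⟩
    · exfalso; subst ha hb; nlinarith [sq_nonneg (a * b)]
    · exfalso; subst ha hb; nlinarith [sq_nonneg (a * b)]
    · exact ⟨-1, by simp, by linarith, by linarith⟩
  obtain ⟨ε, hε, hm, hk⟩ := key
  have hε2 : ε ^ 2 = 1 := by rcases hε with rfl | rfl <;> norm_num
  have hsq : y ^ 2 = (ε * (a * b)) ^ 2 := by
    rw [← h, hm, hk]; ring
  have hodd : Odd (ε * (a * b)) := by
    have : Odd ((ε * (a * b)) ^ 2) := hsq ▸ hy.pow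
    exact (Int.odd_pow.1 this).resolve_right (by norm_num)
  have hab := (Int.odd_mul.1 hodd).2
  have ha' := (Int.odd_mul.1 hab).1
  have hb' := (Int.odd_mul.1 hab).2
  rcases sq_eq_sq_iff_eq_or_eq_neg.1 hsq with h1 | h1
  · exact ⟨a, b, ε, ha', hb', hε, hm, hk, h1⟩
  · exact ⟨a, -b, ε, ha', hb'.neg, hε, hm, by rw [hk]; ring, by rw [h1]; ring⟩

lemma aux_cop (x : ℤ) (hx : Odd x) : IsCoprime (x + 4) (x - 4) := by
  have h2 : IsCoprime (x - 4) (2 : ℤ) := by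
    obtain ⟨t, rfl⟩ := hx
    exact ⟨1, -(t - 2), by ring⟩
  have h8 : IsCoprime (x - 4) ((2 : ℤ) ^ 3) := h2.pow_right
  obtain ⟨u, v, h⟩ := h8
  exact ⟨v, u - v, by linear_combination h⟩


/-- Every odd solution `(x,y)` of `x² - d y² = 16` with `x ≡ ±4 (mod d)` is, up to an
overall sign, an associated solution (3.1.29) or (3.1.30) of a solution `(a,b)` of one
of the equations `a² - d b² = ±8`. -/
theorem stmt_3 (d : ℤ) (hd : 0 < d) (hd8 : d ≡ 1 [ZMOD 8]) (x y : ℤ)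
    (hx : Odd x) (hy : Odd y) (hxy : x ^ 2 - d * y ^ 2 = 16)
    (hcong : x ≡ 4 [ZMOD d] ∨ x ≡ -4 [ZMOD d]) :
    ∃ a b ε : ℤ, Odd a ∧ Odd b ∧ (ε = 1 ∨ ε = -1) ∧
      ((a ^ 2 - d * b ^ 2 = 8 ∧ x = ε * (a ^ 2 - 4) ∧ y = ε * (a * b)) ∨
       (a ^ 2 - d * b ^ 2 = -8 ∧ x = ε * (a ^ 2 + 4) ∧ y = ε * (a * b))) := by

  have hc := aux_cop x hx
  have hd0 : d ≠ 0 := hd.ne'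
  rcases hcong with h | h
  · obtain ⟨k, hk⟩ := h.symm.dvd
    rw [hk] at hc
    have hc' : IsCoprime (x + 4) k := hc.of_mul_right_right
    have hp : (x + 4) * k = y ^ 2 := by
      apply mul_left_cancel₀ hd0
      linear_combination hxy - (x + 4) * hk
    obtain ⟨a, b, ε, ha, hb, hε, h1, h2, h3⟩ := aux_sq k (x + 4) y hc' hy hp
    refine ⟨a, b, ε, ha, hb, hε, ?_⟩
    rcases hε with rfl | rfl
    · left
      exact ⟨by linear_combination hk - h1 + d * h2, by linarith, h3⟩
    · right
      exact ⟨by linear_combination h1 - hk - d * h2, by linarith, h3⟩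
  · obtain ⟨k, hk⟩ := h.symm.dvd
    have hk' : x + 4 = d * k := by linarith
    rw [hk'] at hc
    have hc' : IsCoprime (x - 4) k := hc.of_mul_left_right.symm
    have hp : (x - 4) * k = y ^ 2 := by
      apply mul_left_cancel₀ hd0
      linear_combination hxy - (x - 4) * hk'
    obtain ⟨a, b, ε, ha, hb, hε, h1, h2, h3⟩ := aux_sq k (x - 4) y hc' hy hp
    refine ⟨a, b, ε, ha, hb, hε, ?_⟩
    rcases hε with rfl | rfl
    · right
      exact ⟨by linear_combination hk' - h1 + d * h2, by linarith, h3⟩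
    · left
      exact ⟨by linear_combination h1 - hk' - d * h2, by linarith, h3⟩
end

section
/- Let $k$ be an odd integer and $y$ an integer such that $k^2$ divides $y^2 + 8k$. Then there exists a natural number $b$ with $k = b^2$ or $k = -b^2$; that is, $|k|$ is a perfect square. -/
/-- Key divisibility lemma of Section 3.1: if `k` is odd and `k²` divides `y² + 8k`,
then `|k|` is a perfect square, i.e. `k = b²` or `k = -b²` for some natural `b`. -/
theorem stmt_4 (k y : ℤ) (hk : Odd k) (hdvd : k ^ 2 ∣ y ^ 2 + 8 * k) :
    ∃ b : ℕ, k = (b : ℤ) ^ 2 ∨ k = -((b : ℤ) ^ 2) := by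
  obtain ⟨c, hc⟩ := hdvd
  have h2 : IsCoprime k 2 := by
    obtain ⟨m, hm⟩ := hk
    exact ⟨1, -m, by rw [hm]; ring⟩
  have h8 : IsCoprime k ((2 : ℤ) ^ 3) := h2.pow_right
  have hcop : IsCoprime k (k * c - 8) := by
    obtain ⟨u, v, huv⟩ := h8
    exact ⟨u + v * c, -v, by linear_combination huv⟩
  have heq : k * (k * c - 8) = y ^ 2 := by linear_combination -hc
  obtain ⟨a, ha⟩ := Int.sq_of_isCoprime hcop heq
  exact ⟨a.natAbs, by simpa using ha⟩
end

section
/- For every positive integer $k$, the number $d = (14k + 1)^2 - 8$ belongs to $\mathcal{D}_+$ but not to $\mathcal{D}_-$ (indeed, the equation $a^2 - d b^2 = -8$ has no solution in integers $a, b$ at all). Consequently, the set $\mathcal{D}_+ \setminus \mathcal{D}_-$ is infinite. -/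
/-- `𝒟₊`: positive integers `d` such that `a² - d b² = 8` has a solution in odd integers. -/
def Dplus : Set ℕ :=
  {d | 0 < d ∧ ∃ a b : ℤ, Odd a ∧ Odd b ∧ a ^ 2 - (d : ℤ) * b ^ 2 = 8}

/-- `𝒟₋`: positive integers `d` such that `a² - d b² = -8` has a solution in odd integers. -/
def Dminus : Set ℕ :=
  {d | 0 < d ∧ ∃ a b : ℤ, Odd a ∧ Odd b ∧ a ^ 2 - (d : ℤ) * b ^ 2 = -8}

/-- For every positive `k`, the number `d = (14k+1)² - 8` lies in `𝒟₊` and the equation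
`a² - d b² = -8` has no integral solution at all (so `d ∉ 𝒟₋`); hence `𝒟₊ \ 𝒟₋` is
infinite. -/
theorem stmt_9 :
    (∀ k : ℕ, 0 < k →
      (14 * k + 1) ^ 2 - 8 ∈ Dplus ∧
      (¬ ∃ a b : ℤ, a ^ 2 - (((14 * k + 1) ^ 2 - 8 : ℕ) : ℤ) * b ^ 2 = -8) ∧
      (14 * k + 1) ^ 2 - 8 ∉ Dminus) ∧
    (Dplus \ Dminus).Infinite := by
  have cast : ∀ k : ℕ, 0 < k →
      (((14 * k + 1) ^ 2 - 8 : ℕ) : ℤ) = (14 * (k : ℤ) + 1) ^ 2 - 8 := by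
    intro k hk
    have h : 8 ≤ (14 * k + 1) ^ 2 := by nlinarith
    push_cast [Nat.cast_sub h]
    ring
  have key : ∀ k : ℕ, 0 < k →
      (14 * k + 1) ^ 2 - 8 ∈ Dplus ∧
      (¬ ∃ a b : ℤ, a ^ 2 - (((14 * k + 1) ^ 2 - 8 : ℕ) : ℤ) * b ^ 2 = -8) ∧
      (14 * k + 1) ^ 2 - 8 ∉ Dminus := by
    intro k hk
    have hno : ¬ ∃ a b : ℤ, a ^ 2 - (((14 * k + 1) ^ 2 - 8 : ℕ) : ℤ) * b ^ 2 = -8 := by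
      rintro ⟨a, b, h⟩
      rw [cast k hk] at h
      have h7 : a ^ 2 = 7 * ((28 * (k : ℤ) ^ 2 + 4 * k - 1) * b ^ 2 - 2) + 6 := by
        linear_combination h
      have h2 : a ^ 2 % 7 = 6 := by omega
      have h3 : a % 7 = 0 ∨ a % 7 = 1 ∨ a % 7 = 2 ∨ a % 7 = 3 ∨ a % 7 = 4 ∨ a % 7 = 5 ∨
          a % 7 = 6 := by omega
      rcases h3 with h3 | h3 | h3 | h3 | h3 | h3 | h3 <;>
        simp [pow_two, Int.mul_emod, h3] at h2
    refine ⟨⟨?_, 14 * k + 1, 1, ⟨7 * k, by ring⟩, odd_one, ?_⟩, hno, ?_⟩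
    · have h : 8 < (14 * k + 1) ^ 2 := by nlinarith
      omega
    · rw [cast k hk]; ring
    · rintro ⟨_, a, b, _, _, h⟩
      exact hno ⟨a, b, h⟩
  refine ⟨key, ?_⟩
  refine Set.infinite_of_injective_forall_mem
    (f := fun n : ℕ => (14 * (n + 1) + 1) ^ 2 - 8) ?_ ?_
  · intro m n h
    have h1 : (((14 * (m + 1) + 1) ^ 2 - 8 : ℕ) : ℤ) = (((14 * (n + 1) + 1) ^ 2 - 8 : ℕ) : ℤ) :=
      congrArg _ h
    rw [cast (m + 1) (by omega), cast (n + 1) (by omega)] at h1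
    push_cast at h1
    have h2 : ((m : ℤ) - n) * (14 * (m + n) + 30) = 0 := by linarith
    rcases mul_eq_zero.mp h2 with h3 | h3 <;> omega
  · intro n
    have h := key (n + 1) (by omega)
    exact ⟨h.1, h.2.2⟩
end

section
/- For every positive integer $k$, the number $d = (6k + 1)^2 + 8$ belongs to $\mathcal{D}_-$ but not to $\mathcal{D}_+$ (indeed, the equation $a^2 - d b^2 = 8$ has no solution in integers $a, b$ at all). Consequently, the set $\mathcal{D}_- \setminus \mathcal{D}_+$ is infinite. -/
/-- For every positive `k`, the number `d = (6k+1)² + 8` lies in `𝒟₋` and the equation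
`a² - d b² = 8` has no integral solution at all (so `d ∉ 𝒟₊`); hence `𝒟₋ \ 𝒟₊` is
infinite. -/
theorem stmt_10 :
    (∀ k : ℕ, 0 < k →
      (6 * k + 1) ^ 2 + 8 ∈ Dminus ∧
      (¬ ∃ a b : ℤ, a ^ 2 - (((6 * k + 1) ^ 2 + 8 : ℕ) : ℤ) * b ^ 2 = 8) ∧
      (6 * k + 1) ^ 2 + 8 ∉ Dplus) ∧
    (Dminus \ Dplus).Infinite := by
  have key : ∀ k : ℕ, ¬ ∃ a b : ℤ, a ^ 2 - (((6 * k + 1) ^ 2 + 8 : ℕ) : ℤ) * b ^ 2 = 8 := by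
    rintro k ⟨a, b, h⟩
    push_cast at h
    have h2 : a ^ 2 = 3 * ((12 * (k : ℤ) ^ 2 + 4 * k + 3) * b ^ 2 + 2) + 2 := by
      linear_combination h
    have h3 : a ^ 2 % 3 = 2 := by omega
    have h4 : a % 3 = 0 ∨ a % 3 = 1 ∨ a % 3 = 2 := by omega
    rcases h4 with h4 | h4 | h4 <;> simp [pow_two, Int.mul_emod, h4] at h3
  have hm : ∀ k : ℕ, (6 * k + 1) ^ 2 + 8 ∈ Dminus := by
    intro k
    refine ⟨by positivity, 6 * k + 1, 1, ⟨3 * k, by ring⟩, odd_one, ?_⟩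
    push_cast
    ring
  have hp : ∀ k : ℕ, (6 * k + 1) ^ 2 + 8 ∉ Dplus := by
    rintro k ⟨_, a, b, _, _, h⟩
    exact key k ⟨a, b, h⟩
  refine ⟨fun k _ => ⟨hm k, key k, hp k⟩, ?_⟩
  refine Set.infinite_of_injective_forall_mem (f := fun k : ℕ => (6 * k + 1) ^ 2 + 8) ?_
    (fun k => ⟨hm k, hp k⟩)
  intro x y hxy
  have h1 : (6 * x + 1) ^ 2 = (6 * y + 1) ^ 2 := Nat.add_right_cancel hxy
  have h2 := Nat.pow_left_injective (n := 2) (by norm_num) h1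
  omega
end

section
/- Let $d$ be a positive integer with $d \equiv 1 \pmod 8$ and let $\epsilon \in \{1, -1\}$. Then the equation $a^2 - d b^2 = 8\epsilon$ has a solution $a, b$ in the ring $\mathbb{Z}_p$ of $p$-adic integers for every prime $p$ if and only if for every odd prime $p$ dividing $d$, the residue class of $2\epsilon$ is a nonzero square modulo $p$ (equivalently, the Legendre symbol $\left(\frac{2\epsilon}{p}\right) = 1$). -/
open Polynomial in
lemma hensel_quad (p : ℕ) [Fact p.Prime] (u c a : ℤ_[p])
    (h : ‖u * a ^ 2 - c‖ < ‖2 * u * a‖ ^ 2) : ∃ z : ℤ_[p], u * z ^ 2 = c := by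
  have h1 : (aeval a) (C u * X ^ 2 - C c : ℤ_[p][X]) = u * a ^ 2 - c := by simp
  have h2 : (aeval a) (derivative (C u * X ^ 2 - C c : ℤ_[p][X])) = 2 * u * a := by
    simp; ring
  obtain ⟨z, hz, -⟩ := hensels_lemma (F := (C u * X ^ 2 - C c : ℤ_[p][X])) (a := a)
    (by rw [h1, h2]; exact h)
  refine ⟨z, ?_⟩
  simp at hz
  exact sub_eq_zero.mp hz

lemma norm_lt_iff_toZMod (p : ℕ) [Fact p.Prime] (x : ℤ_[p]) :
    ‖x‖ < 1 ↔ PadicInt.toZMod x = 0 := by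
  rw [← RingHom.mem_ker, PadicInt.ker_toZMod, IsLocalRing.mem_maximalIdeal,
    PadicInt.mem_nonunits]

lemma hensel_quad_odd (p : ℕ) [Fact p.Prime] (u c a : ℤ_[p])
    (h : PadicInt.toZMod (u * a ^ 2) = PadicInt.toZMod c)
    (h' : PadicInt.toZMod (2 * u * a) ≠ 0) : ∃ z : ℤ_[p], u * z ^ 2 = c := by
  apply hensel_quad p u c a
  have h1 : ‖2 * u * a‖ = 1 := by
    refine le_antisymm (PadicInt.norm_le_one _) (not_lt.mp ?_)
    rw [norm_lt_iff_toZMod]; exact h'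
  rw [h1, one_pow, norm_lt_iff_toZMod, map_sub, h, sub_self]

lemma two_ne (p : ℕ) [Fact p.Prime] (hp : Odd p) : (2 : ZMod p) ≠ 0 := by
  intro h
  have h' : ((2 : ℕ) : ZMod p) = 0 := by exact_mod_cast h
  rw [ZMod.natCast_eq_zero_iff, Nat.prime_dvd_prime_iff_eq Fact.out Nat.prime_two] at h'
  subst h'
  revert hp; decide

lemma lift_sol (p : ℕ) [Fact p.Prime] (hp : Odd p) (d : ℕ) (m : ℤ) (x y : ZMod p)
    (h : x ^ 2 - d * y ^ 2 = m) (h' : x ≠ 0 ∨ ((d : ZMod p) ≠ 0 ∧ y ≠ 0)) :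
    ∃ a b : ℤ_[p], a ^ 2 - (d : ℤ_[p]) * b ^ 2 = (m : ℤ_[p]) := by
  have h2 := two_ne p hp
  obtain ⟨a, rfl⟩ := ZMod.ringHom_surjective (PadicInt.toZMod (p := p)) x
  obtain ⟨b, rfl⟩ := ZMod.ringHom_surjective (PadicInt.toZMod (p := p)) y
  rcases h' with hx | ⟨hd, hy⟩
  · obtain ⟨z, hz⟩ := hensel_quad_odd p 1 (d * b ^ 2 + m) a
      (by simp; linear_combination h) (by simp [hx, map_ofNat (PadicInt.toZMod (p := p)) 2, h2])
    exact ⟨z, b, by linear_combination hz⟩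
  · obtain ⟨z, hz⟩ := hensel_quad_odd p d (a ^ 2 - m) b
      (by simp; linear_combination -h) (by simp [hd, hy, map_ofNat (PadicInt.toZMod (p := p)) 2, h2])
    exact ⟨a, z, by linear_combination -hz⟩

lemma sol_mod (p : ℕ) [Fact p.Prime] (hp : Odd p) (d m : ZMod p) (hd : d ≠ 0) :
    ∃ x y : ZMod p, x ^ 2 - d * y ^ 2 = m := by
  open Polynomial in
  obtain ⟨x, y, h⟩ := FiniteField.exists_root_sum_quadratic
    (f := (X ^ 2 : (ZMod p)[X])) (g := C (-d) * X ^ 2 + C 0 * X + C (-m))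
    (degree_X_pow 2) (degree_quadratic (neg_ne_zero.mpr hd))
    (by rw [ZMod.card]; exact Nat.odd_iff.mp hp)
  refine ⟨x, y, ?_⟩
  simp at h
  linear_combination h

lemma sol_two (d : ℕ) (hd8 : d % 8 = 1) (ε : ℤ) :
    ∃ a b : ℤ_[2], a ^ 2 - (d : ℤ_[2]) * b ^ 2 = ((8 * ε : ℤ) : ℤ_[2]) := by
  obtain ⟨z, hz⟩ := hensel_quad 2 1 ((d + 8 * ε : ℤ) : ℤ_[2]) 1 (by
    have e : (1 * 1 ^ 2 - ((d + 8 * ε : ℤ) : ℤ_[2])) = ((1 - (d + 8 * ε) : ℤ) : ℤ_[2]) := by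
      push_cast; ring
    have h1 : ‖((1 - (d + 8 * ε) : ℤ) : ℤ_[2])‖ ≤ ((2 : ℕ) : ℝ) ^ (-(3 : ℕ) : ℤ) := by
      rw [PadicInt.norm_int_le_pow_iff_dvd]
      norm_num; omega
    have h2 : ‖(2 : ℤ_[2])‖ = 2⁻¹ := by
      simpa using PadicInt.norm_p (p := 2)
    rw [e, mul_one, mul_one, h2]
    refine lt_of_le_of_lt h1 ?_
    norm_num)
  refine ⟨z, 1, ?_⟩
  push_cast at hz ⊢
  linear_combination hz

/-- Proposition 3.2.4: for `d ≡ 1 (mod 8)` and a sign `ε = ±1`, the equation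
`a² - d b² = 8ε` is solvable in the `p`-adic integers for every prime `p` iff for every
odd prime `p` dividing `d` the class of `2ε` is a nonzero square modulo `p`. -/
theorem stmt_11 (d : ℕ) (hd : 0 < d) (hd8 : d % 8 = 1) (ε : ℤ) (hε : ε = 1 ∨ ε = -1) :
    (∀ (p : ℕ) [Fact p.Prime], ∃ a b : ℤ_[p],
        a ^ 2 - (d : ℤ_[p]) * b ^ 2 = ((8 * ε : ℤ) : ℤ_[p])) ↔
    (∀ p : ℕ, p.Prime → Odd p → p ∣ d →
        IsSquare ((2 * ε : ℤ) : ZMod p) ∧ ((2 * ε : ℤ) : ZMod p) ≠ 0) := by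
  have hεsq : ε ^ 2 = 1 := by rcases hε with rfl | rfl <;> norm_num
  constructor
  · intro H p hp hodd hpd
    haveI : Fact p.Prime := ⟨hp⟩
    have h2 := two_ne p hodd
    have he : ((ε : ZMod p)) ≠ 0 := by
      intro h
      have : ((ε ^ 2 : ℤ) : ZMod p) = 1 := by rw [hεsq]; simp
      simp [h] at this
    obtain ⟨a, b, h⟩ := H p
    have hd0 : (d : ZMod p) = 0 := (ZMod.natCast_eq_zero_iff d p).mpr hpd
    have h3 := congrArg (PadicInt.toZMod (p := p)) h
    simp [hd0, map_ofNat (PadicInt.toZMod (p := p)) 8] at h3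
    push_cast
    refine ⟨⟨PadicInt.toZMod a / 2, ?_⟩, mul_ne_zero h2 he⟩
    field_simp
    linear_combination -h3
  · intro H p _
    have hp : p.Prime := Fact.out
    rcases hp.eq_two_or_odd' with rfl | hodd
    · exact sol_two d hd8 ε
    have h2 := two_ne p hodd
    have he : ((ε : ZMod p)) ≠ 0 := by
      intro h
      have : ((ε ^ 2 : ℤ) : ZMod p) = 1 := by rw [hεsq]; simp
      simp [h] at this
    by_cases hpd : p ∣ d
    · obtain ⟨⟨s, hs⟩, h0⟩ := H p hp hodd hpd
      have hs0 : s ≠ 0 := by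
        rintro rfl
        exact h0 (by rw [hs]; simp)
      push_cast at hs
      exact lift_sol p hodd d _ (2 * s) 0 (by push_cast; linear_combination -4 * hs)
        (Or.inl (mul_ne_zero h2 hs0))
    · have hd0 : (d : ZMod p) ≠ 0 := fun h => hpd ((ZMod.natCast_eq_zero_iff d p).mp h)
      obtain ⟨x, y, h⟩ := sol_mod p hodd (d : ZMod p) ((8 * ε : ℤ) : ZMod p) hd0
      refine lift_sol p hodd d _ x y h ?_
      by_cases hx : x = 0
      · refine Or.inr ⟨hd0, ?_⟩
        rintro rfl
        subst hx
        have h8 : (2 : ZMod p) ^ 3 * ε = 0 := by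
          push_cast at h; linear_combination -h
        exact mul_ne_zero (pow_ne_zero 3 h2) he h8
      · exact Or.inl hx
end

section
/- Let $d$ be a positive integer with $d \equiv 1 \pmod 4$, and let $G = \begin{pmatrix} 2 & 1 \\ 1 & (1-d)/2 \end{pmatrix}$, a symmetric integer matrix. Then for any vectors $v, w \in \mathbb{Z}^2$ with $v^{T} G v = 2$ and $w^{T} G w = 2$, there exist exactly two $2 \times 2$ integer matrices $M$ satisfying $M^{T} G M = G$ and $M w = v$. -/
open Matrix

def GG (k : ℤ) : Matrix (Fin 2) (Fin 2) ℤ := !![2, 1; 1, -2 * k]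
def PP (k a b : ℤ) : Matrix (Fin 2) (Fin 2) ℤ := !![a, k * b; b, a + b]
def QQ (k a b : ℤ) : Matrix (Fin 2) (Fin 2) ℤ := !![a + b, -(k * b); -b, a]
def SS : Matrix (Fin 2) (Fin 2) ℤ := !![1, 1; 0, -1]

lemma PP_mul_QQ (k a b : ℤ) (h : a * a + a * b - k * b * b = 1) : PP k a b * QQ k a b = 1 := by
  ext i j
  fin_cases i <;> fin_cases j <;> simp [PP, QQ, Matrix.mul_apply, Fin.sum_univ_two] <;> linarith

lemma QQ_mul_PP (k a b : ℤ) (h : a * a + a * b - k * b * b = 1) : QQ k a b * PP k a b = 1 :=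
  mul_eq_one_comm.mp (PP_mul_QQ k a b h)

lemma PP_iso (k a b : ℤ) (h : a * a + a * b - k * b * b = 1) :
    (PP k a b)ᵀ * GG k * PP k a b = GG k := by
  ext i j
  fin_cases i <;> fin_cases j <;>
    simp [PP, GG, Matrix.mul_apply, Fin.sum_univ_two]
  · linear_combination 2 * h
  · linear_combination h
  · linear_combination h
  · linear_combination -2 * k * h

lemma QQ_iso (k a b : ℤ) (h : a * a + a * b - k * b * b = 1) :
    (QQ k a b)ᵀ * GG k * QQ k a b = GG k := by
  ext i j
  fin_cases i <;> fin_cases j <;>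
    simp [QQ, GG, Matrix.mul_apply, Fin.sum_univ_two]
  · linear_combination 2 * h
  · linear_combination h
  · linear_combination h
  · linear_combination -2 * k * h

lemma SS_iso (k : ℤ) : SSᵀ * GG k * SS = GG k := by
  ext i j
  fin_cases i <;> fin_cases j <;>
    simp [SS, GG, Matrix.mul_apply, Fin.sum_univ_two]

lemma comp_iso {G A B : Matrix (Fin 2) (Fin 2) ℤ} (hA : Aᵀ * G * A = G) (hB : Bᵀ * G * B = G) :
    (A * B)ᵀ * G * (A * B) = G := by
  calc (A * B)ᵀ * G * (A * B) = Bᵀ * (Aᵀ * G * A) * B := by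
        rw [Matrix.transpose_mul]; simp only [Matrix.mul_assoc]
    _ = G := by rw [hA, hB]

lemma PP_e (k : ℤ) (v : Fin 2 → ℤ) : (PP k (v 0) (v 1)).mulVec ![1, 0] = v := by
  ext i
  fin_cases i <;> simp [PP, Matrix.mulVec, dotProduct, Fin.sum_univ_two]

lemma stab (k : ℤ) (hk : 0 ≤ k) (N : Matrix (Fin 2) (Fin 2) ℤ) (h : Nᵀ * GG k * N = GG k)
    (he : N.mulVec ![1, 0] = ![1, 0]) : N = 1 ∨ N = SS := by
  have h0 := congrFun he 0
  have h1 := congrFun he 1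
  have h01 := congrFun (congrFun h 0) 1
  have h11 := congrFun (congrFun h 1) 1
  simp [Matrix.mulVec, dotProduct, Fin.sum_univ_two] at h0 h1
  simp [GG, Matrix.mul_apply, Fin.sum_univ_two, h0, h1] at h01 h11
  have he : N 1 1 = 1 - 2 * N 0 1 := by linarith
  rw [he] at h11
  have hp : (1 + 4 * k) * (N 0 1 * (1 - N 0 1)) = 0 := by linarith
  rcases mul_eq_zero.mp hp with hp | hp
  · omega
  rcases mul_eq_zero.mp hp with hp | hp
  · left
    ext i j
    fin_cases i <;> fin_cases j <;> simp [h0, h1, he, hp]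
  · right
    have hb : N 0 1 = 1 := by linarith
    ext i j
    fin_cases i <;> fin_cases j <;> simp [h0, h1, he, hb, SS]

/-- Proposition 3.1.2: in the even hyperbolic lattice `N²_d` of determinant `-d`
(Gram matrix `!![2, 1; 1, (1-d)/2]`), for any two vectors of square `2` there exist
exactly two isometries of the lattice taking one to the other. -/
theorem stmt_17 (d : ℤ) (hd : 0 < d) (hd4 : d % 4 = 1) :
    ∀ v w : Fin 2 → ℤ,
      v ⬝ᵥ (!![2, 1; 1, (1 - d) / 2] : Matrix (Fin 2) (Fin 2) ℤ).mulVec v = 2 →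
      w ⬝ᵥ (!![2, 1; 1, (1 - d) / 2] : Matrix (Fin 2) (Fin 2) ℤ).mulVec w = 2 →
      {M : Matrix (Fin 2) (Fin 2) ℤ |
        Mᵀ * !![2, 1; 1, (1 - d) / 2] * M = !![2, 1; 1, (1 - d) / 2] ∧
        M.mulVec w = v}.ncard = 2 := by
  intro v w hv hw
  obtain ⟨k, hk, hdk⟩ : ∃ k : ℤ, 0 ≤ k ∧ (1 - d) / 2 = -2 * k := ⟨d / 4, by omega, by omega⟩
  rw [hdk] at hv hw ⊢
  have key : ∀ u : Fin 2 → ℤ,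
      u ⬝ᵥ (!![2, 1; 1, -2 * k] : Matrix (Fin 2) (Fin 2) ℤ).mulVec u = 2 →
      u 0 * u 0 + u 0 * u 1 - k * u 1 * u 1 = 1 := by
    intro u hu
    simp [Matrix.mulVec, dotProduct, Fin.sum_univ_two] at hu
    linarith
  have hv' := key v hv
  have hw' := key w hw
  change {M : Matrix (Fin 2) (Fin 2) ℤ | Mᵀ * GG k * M = GG k ∧ M.mulVec w = v}.ncard = 2
  have iPv := PP_iso k _ _ hv'
  have iQv := QQ_iso k _ _ hv'
  have iPw := PP_iso k _ _ hw'
  have iQw := QQ_iso k _ _ hw'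
  have v1 := PP_mul_QQ k _ _ hv'
  have v2 := QQ_mul_PP k _ _ hv'
  have w1 := PP_mul_QQ k _ _ hw'
  have w2 := QQ_mul_PP k _ _ hw'
  have ev := PP_e k v
  have ew := PP_e k w
  generalize PP k (v 0) (v 1) = Pv at *
  generalize QQ k (v 0) (v 1) = Qv at *
  generalize PP k (w 0) (w 1) = Pw at *
  generalize QQ k (w 0) (w 1) = Qw at *
  have ev' : Qv.mulVec v = ![1, 0] := by
    rw [← ev, Matrix.mulVec_mulVec, v2, Matrix.one_mulVec]
  have ew' : Qw.mulVec w = ![1, 0] := by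
    rw [← ew, Matrix.mulVec_mulVec, w2, Matrix.one_mulVec]
  have eS : SS.mulVec ![1, 0] = ![1, 0] := by decide
  have hset : {M : Matrix (Fin 2) (Fin 2) ℤ | Mᵀ * GG k * M = GG k ∧ M.mulVec w = v}
      = {Pv * Qw, Pv * SS * Qw} := by
    ext M
    simp only [Set.mem_setOf_eq, Set.mem_insert_iff, Set.mem_singleton_iff]
    constructor
    · rintro ⟨hM, hMw⟩
      have hrec : Pv * (Qv * M * Pw) * Qw = M := by
        calc Pv * (Qv * M * Pw) * Qw = (Pv * Qv) * M * (Pw * Qw) := by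
              simp only [Matrix.mul_assoc]
          _ = M := by rw [v1, w1, one_mul, mul_one]
      rcases stab k hk (Qv * M * Pw) (comp_iso (comp_iso iQv hM) iPw)
        (by rw [← Matrix.mulVec_mulVec, ew, ← Matrix.mulVec_mulVec, hMw, ev']) with h | h
      · left; rw [← hrec, h, mul_one]
      · right; rw [← hrec, h]
    · rintro (rfl | rfl)
      · exact ⟨comp_iso iPv iQw, by rw [← Matrix.mulVec_mulVec, ew', ev]⟩
      · exact ⟨comp_iso (comp_iso iPv (SS_iso k)) iQw, by
          rw [← Matrix.mulVec_mulVec, ew', ← Matrix.mulVec_mulVec, eS, ev]⟩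
  rw [hset]
  apply Set.ncard_pair
  intro h
  have h2 : Qv * (Pv * Qw) * Pw = Qv * (Pv * SS * Qw) * Pw := by rw [h]
  have h3 : (1 : Matrix (Fin 2) (Fin 2) ℤ) = SS := by
    calc (1 : Matrix (Fin 2) (Fin 2) ℤ) = (Qv * Pv) * (Qw * Pw) := by rw [v2, w2, one_mul]
      _ = Qv * (Pv * Qw) * Pw := by simp only [Matrix.mul_assoc]
      _ = Qv * (Pv * SS * Qw) * Pw := h2
      _ = (Qv * Pv) * SS * (Qw * Pw) := by simp only [Matrix.mul_assoc]
      _ = SS := by rw [v2, w2, one_mul, mul_one]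
  have := congrFun (congrFun h3 0) 1
  simp [SS] at this
end

section
/- Let $d$ be a positive integer with $d \equiv 1 \pmod 8$, set $\mu = 1$ if $d \equiv 1 \pmod{16}$ and $\mu = 3$ if $d \equiv 9 \pmod{16}$, and let $G = \begin{pmatrix} -8d & -\mu d \\ -\mu d & (1 - d\mu^2)/8 \end{pmatrix}$, a symmetric integer matrix. Then for any vectors $v, w \in \mathbb{Z}^2$, each having coprime coordinates and satisfying $v^{T} G v = 8$ and $w^{T} G w = 8$, there exists a unique $2 \times 2$ integer matrix $M$ satisfying $M^{T} G M = G$ and $M w = v$. -/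
open Matrix

lemma aux_exists (d c μ k n : ℤ) (hk : d = 8 * k + 1) (hμ : μ = 1 ∨ μ = 3)
    (hc : 8 * c = 1 - d * μ ^ 2) (hn : c = 2 * n) (a b : ℤ) (hab : IsCoprime a b)
    (h : a * (-8 * d * a + -μ * d * b) + b * (-μ * d * a + c * b) = 8) :
    ∃ P : Matrix (Fin 2) (Fin 2) ℤ,
      Pᵀ * !![-8 * d, -μ * d; -μ * d, c] * P = !![-8 * d, -μ * d; -μ * d, c] ∧
      P.mulVec ![-μ, 8] = ![a, b] ∧ P.det * P.det = 1 := by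
  obtain ⟨r, s, hrs⟩ := hab
  obtain ⟨p, hp⟩ : ∃ p, p = -8 * d * a + -μ * d * b := ⟨_, rfl⟩
  obtain ⟨q, hq⟩ : ∃ q, q = -μ * d * a + c * b := ⟨_, rfl⟩
  rw [← hp, ← hq] at h
  have ha : p * c + q * (μ * d) = -d * a := by
    rw [hp, hq]; linear_combination (-d * a) * hc
  have hb : -p * (μ * d) + 8 * d * q = d * b := by
    rw [hp, hq]; linear_combination (d * b) * hc
  obtain ⟨r', s', hpq⟩ : ∃ r' s', r' * p + s' * q = 1 := by
    refine ⟨-r * c - s * (μ * d) - k * a, -r * (μ * d) + s * 8 * d - k * b, ?_⟩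
    linear_combination (-r) * ha + s * hb + d * hrs - k * h + hk
  -- orthogonal generator is (-q, p)
  obtain ⟨m, hm⟩ : ∃ m, m = a * s' - b * r' := ⟨_, rfl⟩
  have h1 : a = m * q + 8 * r' := by
    rw [hm]; linear_combination (-a) * hpq + r' * h
  have h2 : b = -m * p + 8 * s' := by
    rw [hm]; linear_combination (-b) * hpq + s' * h
  -- norm of (r', s')
  have hδ : -8 * d * q ^ 2 + 2 * μ * d * p * q + c * p ^ 2 = -8 * d := by
    have e1 : q * (8 * d * q - p * (μ * d)) = d * b * q := by linear_combination q * hb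
    linear_combination (-1 : ℤ) * q * hb + p * ha - d * h
  have hu : 8 * (-8 * d * r' ^ 2 - 2 * μ * d * r' * s' + c * s' ^ 2) = 1 - d * m ^ 2 := by
    have h1' : 8 * r' = a - m * q := by linarith
    have h2' : 8 * s' = b + m * p := by linarith
    have h64 : 8 * (8 * (-8 * d * r' ^ 2 - 2 * μ * d * r' * s' + c * s' ^ 2)) =
        8 * (1 - d * m ^ 2) := by
      have : 8 * (8 * (-8 * d * r' ^ 2 - 2 * μ * d * r' * s' + c * s' ^ 2)) =
        -8 * d * (8 * r') ^ 2 - 2 * μ * d * (8 * r') * (8 * s') + c * (8 * s') ^ 2 := by ring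
      rw [this, h1', h2']
      rw [← sub_eq_zero]
      linear_combination h + m ^ 2 * hδ - (a - 2 * m * q) * hp - (b + 2 * m * p) * hq
    linarith
  have hm8 : (∃ j, m = μ + 8 * j) ∨ ∃ j, m = -μ + 8 * j := by
    obtain ⟨T, hT⟩ : ∃ T, d * m ^ 2 = 1 + 16 * T :=
      ⟨-(-4 * d * r' ^ 2 - μ * d * r' * s' + n * s' ^ 2), by rw [hn] at hu; linarith⟩
    obtain ⟨S, hS⟩ : ∃ S, d * μ ^ 2 = 1 + 16 * S := ⟨-n, by rw [hn] at hc; linarith⟩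
    have e : (16 : ℤ) ∣ m ^ 2 - μ ^ 2 := by
      refine ⟨T * μ ^ 2 - S * m ^ 2 , ?_⟩
      linear_combination (μ ^ 2) * hT - m ^ 2 * hS
    have key : (m - μ) % 8 = 0 ∨ (m + μ) % 8 = 0 := by
      obtain ⟨z, hz⟩ : ∃ z, m = 8 * (m / 8) + z ∧ 0 ≤ z ∧ z < 8 := ⟨m % 8, by omega⟩
      obtain ⟨hz, hz0, hz8⟩ := hz
      obtain ⟨x, hx⟩ := e
      generalize m / 8 = y at hz
      subst hz
      have : z ^ 2 - μ ^ 2 = 16 * (x - 4 * y ^ 2 - y * z) := by linear_combination hx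
      generalize x - 4 * y ^ 2 - y * z = w at this
      rcases hμ with rfl | rfl <;> interval_cases z <;> omega
    rcases key with h | h
    · left; exact ⟨(m - μ) / 8, by omega⟩
    · right; exact ⟨(m + μ) / 8, by omega⟩
  -- normalized
  obtain ⟨ε, x, y, hε, hx, hy⟩ : ∃ ε x y : ℤ, ε * ε = 1 ∧ 8 * x = a - μ * (ε * q) ∧
      8 * y = b + μ * (ε * p) := by
    rcases hm8 with ⟨j, hj⟩ | ⟨j, hj⟩
    · exact ⟨1, r' + j * q, s' - j * p, by norm_num,
        by linear_combination (-1 : ℤ) * h1 - q * hj, by linear_combination (-1 : ℤ) * h2 + p * hj⟩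
    · exact ⟨-1, r' + j * q, s' - j * p, by norm_num,
        by linear_combination (-1 : ℤ) * h1 - q * hj, by linear_combination (-1 : ℤ) * h2 + p * hj⟩
  have g11 : -8 * d * (-ε * q) ^ 2 + 2 * (-μ * d) * (-ε * q) * (ε * p) + c * (ε * p) ^ 2
      = -8 * d := by
    linear_combination hδ + (-8 * d * q ^ 2 + 2 * μ * d * p * q + c * p ^ 2) * hε
  have g12 : -8 * d * (-ε * q) * x + (-μ * d) * ((-ε * q) * y + (ε * p) * x) + c * (ε * p) * y
      = -μ * d := by
    have : 8 * (-8 * d * (-ε * q) * x + (-μ * d) * ((-ε * q) * y + (ε * p) * x)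
        + c * (ε * p) * y) = 8 * (-μ * d) := by
      linear_combination (8 * d * ε * q - μ * d * ε * p) * hx + (μ * d * ε * q + c * ε * p) * hy
        + μ * g11 + ε * q * hp - ε * p * hq
    linarith
  have g22 : -8 * d * x ^ 2 + 2 * (-μ * d) * x * y + c * y ^ 2 = c := by
    have : 64 * (-8 * d * x ^ 2 + 2 * (-μ * d) * x * y + c * y ^ 2) = 64 * c := by
      have : 64 * (-8 * d * x ^ 2 + 2 * (-μ * d) * x * y + c * y ^ 2) =
        -8 * d * (8 * x) ^ 2 + 2 * (-μ * d) * (8 * x) * (8 * y) + c * (8 * y) ^ 2 := by ring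
      rw [this, hx, hy]
      linear_combination h + μ ^ 2 * g11 - (a - 2 * μ * ε * q) * hp
        - (b + 2 * μ * ε * p) * hq - 8 * hc
    linarith
  have hdet : (-ε * q) * y - x * (ε * p) = -ε := by
    have : 8 * ((-ε * q) * y - x * (ε * p)) = 8 * (-ε) := by
      linear_combination (-ε * q) * hy - ε * p * hx - ε * h
    linarith
  refine ⟨!![-ε * q, x; ε * p, y], ?_, ?_, ?_⟩
  · ext i j
    fin_cases i <;> fin_cases j <;>
      simp [Matrix.mul_apply, Fin.sum_univ_two]
    · linear_combination g11
    · linear_combination g12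
    · linear_combination g12
    · linear_combination g22
  · ext i
    fin_cases i <;> simp [Matrix.mulVec, dotProduct, Fin.sum_univ_two]
    · linear_combination hx
    · linear_combination hy
  · rw [Matrix.det_fin_two_of, hdet]; linarith

lemma aux_unique (d c μ : ℤ) (hd : 0 < d) (hμ : μ = 1 ∨ μ = 3)
    (hc : 8 * c = 1 - d * μ ^ 2) (Q : Matrix (Fin 2) (Fin 2) ℤ)
    (hQ : Qᵀ * !![-8 * d, -μ * d; -μ * d, c] * Q = !![-8 * d, -μ * d; -μ * d, c])
    (he : Q.mulVec ![-μ, 8] = ![-μ, 8]) : Q = 1 := by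
  have hG : (!![-8 * d, -μ * d; -μ * d, c] : Matrix (Fin 2) (Fin 2) ℤ).mulVec ![-μ, 8]
      = ![0, 1] := by
    ext i
    fin_cases i <;> simp [Matrix.mulVec, dotProduct, Fin.sum_univ_two]
    · ring
    · linear_combination hc
  have h1 : Qᵀ.mulVec ![0, 1] = ![0, 1] := by
    have := congrArg (fun A : Matrix (Fin 2) (Fin 2) ℤ => A.mulVec ![-μ, 8]) hQ
    simp only [← Matrix.mulVec_mulVec] at this
    rwa [he, hG] at this
  have hz := congrFun h1 0
  have ht := congrFun h1 1
  have hx := congrFun he 0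
  have h11 := congrFun (congrFun hQ 0) 0
  simp [Matrix.mulVec, dotProduct, Fin.sum_univ_two] at hz ht hx
  simp [Matrix.mul_apply, Fin.sum_univ_two, hz] at h11
  have hsq : Q 0 0 * Q 0 0 = 1 := by
    have : d * (Q 0 0 * Q 0 0 - 1) = 0 := by linarith
    rcases mul_eq_zero.mp this with h | h
    · omega
    · linarith
  have h00 : Q 0 0 = 1 ∧ Q 0 1 = 0 := by
    rcases mul_self_eq_one_iff.mp hsq with h | h
    · refine ⟨h, ?_⟩
      rw [h] at hx; linarith
    · rw [h] at hx
      rcases hμ with rfl | rfl <;> omega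
  ext i j
  fin_cases i <;> fin_cases j <;> simp [hz, ht, h00.1, h00.2]

/-- Proposition 3.1.1: in the even hyperbolic lattice `N⁸_d` of determinant `-d`
(Gram matrix `!![-8d, -μd; -μd, (1-dμ²)/8]`), for any two primitive vectors of
square `8` there exists a unique isometry of the lattice taking one to the other. -/
theorem stmt_18 (d : ℤ) (hd : 0 < d) (hd8 : d % 8 = 1) (μ : ℤ)
    (hμ1 : d % 16 = 1 → μ = 1) (hμ9 : d % 16 = 9 → μ = 3) :
    ∀ v w : Fin 2 → ℤ, IsCoprime (v 0) (v 1) → IsCoprime (w 0) (w 1) →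
      v ⬝ᵥ (!![-8 * d, -μ * d; -μ * d, (1 - d * μ ^ 2) / 8] :
        Matrix (Fin 2) (Fin 2) ℤ).mulVec v = 8 →
      w ⬝ᵥ (!![-8 * d, -μ * d; -μ * d, (1 - d * μ ^ 2) / 8] :
        Matrix (Fin 2) (Fin 2) ℤ).mulVec w = 8 →
      ∃! M : Matrix (Fin 2) (Fin 2) ℤ,
        Mᵀ * !![-8 * d, -μ * d; -μ * d, (1 - d * μ ^ 2) / 8] * M =
          !![-8 * d, -μ * d; -μ * d, (1 - d * μ ^ 2) / 8] ∧
        M.mulVec w = v := by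
  intro v w hv hw h1 h2
  have hμ : μ = 1 ∨ μ = 3 := by
    rcases (by omega : d % 16 = 1 ∨ d % 16 = 9) with h | h
    · exact Or.inl (hμ1 h)
    · exact Or.inr (hμ9 h)
  have h16 : ∃ n, 1 - d * μ ^ 2 = 16 * n := by
    rcases (by omega : d % 16 = 1 ∨ d % 16 = 9) with h | h
    · rw [hμ1 h]; exact ⟨(1 - d) / 16, by omega⟩
    · rw [hμ9 h]; exact ⟨(1 - d * 9) / 16, by omega⟩
  obtain ⟨n, hn⟩ := h16
  obtain ⟨c, hc'⟩ : ∃ c, c = (1 - d * μ ^ 2) / 8 := ⟨_, rfl⟩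
  rw [← hc'] at h1 h2 ⊢
  have hcn : c = 2 * n := by omega
  have hc : 8 * c = 1 - d * μ ^ 2 := by omega
  have hk : d = 8 * (d / 8) + 1 := by omega
  have ex : ∀ v : Fin 2 → ℤ, IsCoprime (v 0) (v 1) →
      v ⬝ᵥ (!![-8 * d, -μ * d; -μ * d, c] : Matrix (Fin 2) (Fin 2) ℤ).mulVec v = 8 →
      ∃ P : Matrix (Fin 2) (Fin 2) ℤ,
      Pᵀ * !![-8 * d, -μ * d; -μ * d, c] * P = !![-8 * d, -μ * d; -μ * d, c] ∧
      P.mulVec ![-μ, 8] = v ∧ P.det * P.det = 1 := by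
    intro v hv h
    obtain ⟨P, hP1, hP2, hP3⟩ := aux_exists d c μ (d / 8) n hk hμ hc hcn (v 0) (v 1) hv (by
      simp [Matrix.mulVec, dotProduct, Fin.sum_univ_two] at h
      linear_combination h)
    refine ⟨P, hP1, ?_, hP3⟩
    rw [hP2]; ext i; fin_cases i <;> rfl
  obtain ⟨P, hP1, hP2, hP3⟩ := ex v hv h1
  obtain ⟨R, hR1, hR2, hR3⟩ := ex w hw h2
  have hU := aux_unique d c μ hd hμ hc
  generalize (!![-8 * d, -μ * d; -μ * d, c] : Matrix (Fin 2) (Fin 2) ℤ) = G at *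
  have uP : IsUnit P.det := IsUnit.of_mul_eq_one _ hP3
  have uR : IsUnit R.det := IsUnit.of_mul_eq_one _ hR3
  have inv_iso : ∀ A : Matrix (Fin 2) (Fin 2) ℤ, IsUnit A.det → Aᵀ * G * A = G →
      (A⁻¹)ᵀ * G * A⁻¹ = G := by
    intro A uA hA
    have e : (A⁻¹)ᵀ * Aᵀ = 1 := by
      rw [← Matrix.transpose_mul, Matrix.mul_nonsing_inv _ uA, Matrix.transpose_one]
    calc (A⁻¹)ᵀ * G * A⁻¹ = (A⁻¹)ᵀ * (Aᵀ * G * A) * A⁻¹ := by rw [hA]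
      _ = ((A⁻¹)ᵀ * Aᵀ) * G * (A * A⁻¹) := by simp only [Matrix.mul_assoc]
      _ = G := by rw [e, Matrix.mul_nonsing_inv _ uA, Matrix.one_mul, Matrix.mul_one]
  have mul_iso : ∀ A B : Matrix (Fin 2) (Fin 2) ℤ, Aᵀ * G * A = G → Bᵀ * G * B = G →
      (A * B)ᵀ * G * (A * B) = G := by
    intro A B hA hB
    calc (A * B)ᵀ * G * (A * B) = Bᵀ * (Aᵀ * G * A) * B := by
          simp only [Matrix.transpose_mul, Matrix.mul_assoc]
      _ = G := by rw [hA, hB]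
  refine ⟨P * R⁻¹, ⟨mul_iso _ _ hP1 (inv_iso _ uR hR1), ?_⟩, ?_⟩
  · rw [← hR2, Matrix.mulVec_mulVec, Matrix.mul_assoc, Matrix.nonsing_inv_mul _ uR,
      Matrix.mul_one, hP2]
  · rintro N ⟨hN1, hN2⟩
    have hQ := hU (P⁻¹ * (N * R)) (mul_iso _ _ (inv_iso _ uP hP1) (mul_iso _ _ hN1 hR1)) (by
      rw [← Matrix.mulVec_mulVec, ← Matrix.mulVec_mulVec, hR2, hN2, ← hP2, Matrix.mulVec_mulVec,
        Matrix.nonsing_inv_mul _ uP, Matrix.one_mulVec])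
    have hNR : N * R = P := by
      calc N * R = P * (P⁻¹ * (N * R)) := by
            rw [← Matrix.mul_assoc P, Matrix.mul_nonsing_inv _ uP, Matrix.one_mul]
        _ = P := by rw [hQ, Matrix.mul_one]
    rw [← hNR, Matrix.mul_assoc, Matrix.mul_nonsing_inv _ uR, Matrix.mul_one]
end

section
/- Let $d$ be a positive integer with $d \equiv 1 \pmod 8$, set $\mu = 1$ if $d \equiv 1 \pmod{16}$ and $\mu = 3$ if $d \equiv 9 \pmod{16}$, and let $G = \begin{pmatrix} -8d & -\mu d \\ -\mu d & (1 - d\mu^2)/8 \end{pmatrix}$. Then there exists a vector $v \in \mathbb{Z}^2$ with $v^{T} G v = 2$ if and only if there exist odd integers $x, y$ with $x^2 - d y^2 = 16$. -/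
open Matrix

lemma aux_mod (x y m : ℤ) (hx : Odd x) (hy : Odd y) (hm : m = 1 ∨ m = 3)
    (h : (16 : ℤ) ∣ x ^ 2 - m ^ 2 * y ^ 2) : (8 : ℤ) ∣ y - m * x ∨ (8 : ℤ) ∣ y + m * x := by
  have key : ∀ a b c : ZMod 16, (c = 1 ∨ c = 3) → a ^ 2 - c ^ 2 * b ^ 2 = 0 →
      8 * a = 8 → 8 * b = 8 → (2 * (b - c * a) = 0 ∨ 2 * (b + c * a) = 0) := by decide
  have e1 : ((x : ZMod 16)) ^ 2 - (m : ZMod 16) ^ 2 * (y : ZMod 16) ^ 2 = 0 := by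
    have := (ZMod.intCast_zmod_eq_zero_iff_dvd (x ^ 2 - m ^ 2 * y ^ 2) 16).2 (by exact_mod_cast h)
    push_cast at this
    exact this
  have odd8 : ∀ z : ℤ, Odd z → 8 * (z : ZMod 16) = 8 := by
    rintro z ⟨k, rfl⟩
    push_cast
    have : (16 : ZMod 16) = 0 := by decide
    linear_combination (k : ZMod 16) * this
  have hc : (m : ZMod 16) = 1 ∨ (m : ZMod 16) = 3 := by
    rcases hm with rfl | rfl <;> simp
  rcases key _ _ _ hc e1 (odd8 x hx) (odd8 y hy) with h | h
  · left
    have := (ZMod.intCast_zmod_eq_zero_iff_dvd (2 * (y - m * x)) 16).1 (by push_cast; exact h)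
    push_cast at this
    omega
  · right
    have := (ZMod.intCast_zmod_eq_zero_iff_dvd (2 * (y + m * x)) 16).1 (by push_cast; exact h)
    push_cast at this
    omega

/-- Arithmetic content of Proposition 3.1.3: the lattice `N⁸_d`
(Gram matrix `!![-8d, -μd; -μd, (1-dμ²)/8]`) contains an element of square `2`
iff the equation `x² - d y² = 16` has a solution in odd integers. -/
theorem stmt_19 (d : ℤ) (hd : 0 < d) (hd8 : d % 8 = 1) (μ : ℤ)
    (hμ1 : d % 16 = 1 → μ = 1) (hμ9 : d % 16 = 9 → μ = 3) :
    (∃ v : Fin 2 → ℤ,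
      v ⬝ᵥ (!![-8 * d, -μ * d; -μ * d, (1 - d * μ ^ 2) / 8] :
        Matrix (Fin 2) (Fin 2) ℤ).mulVec v = 2) ↔
    (∃ x y : ℤ, Odd x ∧ Odd y ∧ x ^ 2 - d * y ^ 2 = 16) := by
  have hm : μ = 1 ∨ μ = 3 := by
    have : d % 16 = 1 ∨ d % 16 = 9 := by omega
    rcases this with h | h
    · exact Or.inl (hμ1 h)
    · exact Or.inr (hμ9 h)
  obtain ⟨k, hk⟩ : ∃ k, 1 - d * μ ^ 2 = 16 * k := by
    have : d % 16 = 1 ∨ d % 16 = 9 := by omega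
    rcases this with h | h
    · rw [hμ1 h]; exact ⟨(1 - d) / 16, by omega⟩
    · rw [hμ9 h]; exact ⟨(1 - d * 9) / 16, by omega⟩
  have hk2 : (1 - d * μ ^ 2) / 8 = 2 * k := by omega
  rw [hk2]
  have val : ∀ v : Fin 2 → ℤ, v ⬝ᵥ (!![-8 * d, -μ * d; -μ * d, 2 * k] :
        Matrix (Fin 2) (Fin 2) ℤ).mulVec v =
        -8 * d * v 0 ^ 2 - 2 * μ * d * v 0 * v 1 + 2 * k * v 1 ^ 2 := by
    intro v
    simp [Matrix.mulVec, dotProduct, Fin.sum_univ_two]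
    ring
  have sq : ∀ a b : ℤ, 8 * (-8 * d * a ^ 2 - 2 * μ * d * a * b + 2 * k * b ^ 2) =
      b ^ 2 - d * (8 * a + μ * b) ^ 2 := by
    intro a b
    linear_combination (-b ^ 2) * hk
  constructor
  · rintro ⟨v, hv⟩
    rw [val] at hv
    have hs := sq (v 0) (v 1)
    have ho : Odd (v 1) := by
      by_contra h
      obtain ⟨c, hc⟩ := Int.not_odd_iff_even.1 h
      rw [hc] at hv
      have : 4 * (-2 * d * v 0 ^ 2 - μ * d * v 0 * c + 2 * k * c ^ 2) = 2 := by
        linear_combination hv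
      omega
    refine ⟨v 1, 8 * v 0 + μ * v 1, ho, ?_, by linarith⟩
    have hmo : Odd μ := by rcases hm with rfl | rfl <;> decide
    exact Even.add_odd (Even.mul_right (by decide) _) (hmo.mul ho)
  · rintro ⟨x, y, hx, hy, h⟩
    have hdv : (16 : ℤ) ∣ x ^ 2 - μ ^ 2 * y ^ 2 := by
      have hd16 : (16 : ℤ) ∣ d - μ ^ 2 := by
        have : d % 16 = 1 ∨ d % 16 = 9 := by omega
        rcases this with h | h
        · rw [hμ1 h]; omega
        · rw [hμ9 h]; omega
      obtain ⟨t, ht⟩ := hd16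
      exact ⟨1 + t * y ^ 2, by linear_combination h + y ^ 2 * ht⟩
    rcases aux_mod x y μ hx hy hm hdv with ⟨a, ha⟩ | ⟨a, ha⟩
    · refine ⟨![a, x], ?_⟩
      rw [val]
      have hs := sq a x
      rw [show 8 * a + μ * x = y by linarith, h] at hs
      simp only [Matrix.cons_val_zero, Matrix.cons_val_one]
      linarith
    · refine ⟨![-a, x], ?_⟩
      rw [val]
      have hs := sq (-a) x
      rw [show 8 * (-a) + μ * x = -y by linarith, neg_sq y, h] at hs
      simp only [Matrix.cons_val_zero, Matrix.cons_val_one]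
      linarith
end
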